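/- Let (R, 𝔪) be a commutative Artinian local ring with residue field k = R/𝔪, and let σ = (Z, P) be a stability condition on D^b(R) = D^b(mod R) having the Jordan–Hölder property. Then the residue field k, viewed as an object of D^b(mod R) concentrated in degree 0, is σ-stable. -/

import Mathlib

open CategoryTheory Limits Pretriangulated DerivedCategory

universe w v u

section StabilityDefs

variable {D : Type*} [Category D] [HasZeroObject D] [Preadditive D] [HasShift D ℤ]
  [∀ n : ℤ, (CategoryTheory.shiftFunctor D n).Additive] [Pretriangulated D]

/-- An object `E` has a Harder–Narasimhan filtration with respect to the slicing `P`: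
a finite sequence `0 = X₀ → X₁ → ⋯ → Xₙ ≅ E` such that the cone of each
`X_{i-1} → X_i` is a nonzero object of `P(φ_i)`, with `φ₁ > φ₂ > ⋯ > φₙ`. -/
def HasHNFiltration (P : ℝ → Set D) (E : D) : Prop :=
  ∃ (n : ℕ) (X : Fin (n + 1) → D) (f : ∀ i : Fin n, X i.castSucc ⟶ X i.succ)
    (φ : Fin n → ℝ), IsZero (X 0) ∧ Nonempty (X (Fin.last n) ≅ E) ∧ StrictAnti φ ∧
    ∀ i : Fin n, ∃ (A : D) (g : X i.succ ⟶ A) (h : A ⟶ (X i.castSucc)⟦(1 : ℤ)⟧),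
      (Triangle.mk (f i) g h ∈ distTriang D) ∧ ¬ IsZero A ∧ A ∈ P (φ i)

/-- A (Bridgeland) stability condition on the full triangulated subcategory of `D`
determined by the collection of objects `B`. It consists of a central charge `Z`,
additive on distinguished triangles of the subcategory, and of strictly full additive
subcategories `P φ ⊆ B` for `φ ∈ ℝ` satisfying the axioms (s1)–(s4). -/
structure StabilityConditionOn (B : Set D) where
  /-- the central charge -/
  Z : D → ℂ
  /-- the slicing -/
  P : ℝ → Set D
  P_le : ∀ φ : ℝ, P φ ⊆ B
  -- each `P φ` is a strictly full additive subcategory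
  P_iso : ∀ (φ : ℝ) (X Y : D), X ∈ P φ → Nonempty (X ≅ Y) → Y ∈ P φ
  P_zero : ∀ (φ : ℝ) (X : D), IsZero X → X ∈ P φ
  P_biprod : ∀ (φ : ℝ) (X Y : D) (b : BinaryBicone X Y), b.IsBilimit →
    X ∈ P φ → Y ∈ P φ → b.pt ∈ P φ
  -- `Z` is additive on distinguished triangles of the subcategory
  Z_add : ∀ T ∈ distTriang D, T.obj₁ ∈ B → Triangle.obj₂ T ∈ B → T.obj₃ ∈ B →
    Z (Triangle.obj₂ T) = Z T.obj₁ + Z T.obj₃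
  s1 : ∀ (φ : ℝ) (E : D), E ∈ P φ → ¬ IsZero E →
    ∃ m : ℝ, 0 < m ∧ Z E = (m : ℂ) * Complex.exp ((Real.pi : ℂ) * Complex.I * (φ : ℂ))
  s2 : ∀ (φ ψ : ℝ), ψ < φ → ∀ E ∈ P φ, ∀ F ∈ P ψ, ∀ f : E ⟶ F, f = 0
  s3 : ∀ (φ : ℝ) (X : D), X ∈ P (φ + 1) ↔ ∃ Y ∈ P φ, Nonempty (X ≅ Y⟦(1 : ℤ)⟧)
  s4 : ∀ E ∈ B, ¬ IsZero E → HasHNFiltration P E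

variable {B : Set D}

/-- An object is `σ`-semistable of phase `φ` if it is a nonzero object of `P φ`. -/
def StabilityConditionOn.IsSemistable (σ : StabilityConditionOn B) (φ : ℝ) (E : D) : Prop :=
  E ∈ σ.P φ ∧ ¬ IsZero E

/-- An object is `σ`-stable if it is `σ`-semistable of some phase `φ` and is simple in
`P φ`: in any distinguished triangle `A ⟶ E ⟶ C ⟶ A[1]` with `A, C ∈ P φ`, either `A`
or `C` is zero. -/
def StabilityConditionOn.IsStable (σ : StabilityConditionOn B) (φ : ℝ) (E : D) : Prop :=
  σ.IsSemistable φ E ∧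
  ∀ (A C : D) (f : A ⟶ E) (g : E ⟶ C) (h : C ⟶ A⟦(1 : ℤ)⟧),
    (Triangle.mk f g h ∈ distTriang D) → A ∈ σ.P φ → C ∈ σ.P φ → IsZero A ∨ IsZero C

/-- `σ` has the Jordan–Hölder property: every `σ`-semistable object of phase `φ` has a
finite filtration whose successive cones are `σ`-stable of phase `φ`. -/
def StabilityConditionOn.HasJHProperty (σ : StabilityConditionOn B) : Prop :=
  ∀ (φ : ℝ) (E : D), E ∈ σ.P φ → ¬ IsZero E →
    ∃ (n : ℕ) (X : Fin (n + 1) → D) (f : ∀ i : Fin n, X i.castSucc ⟶ X i.succ),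
      IsZero (X 0) ∧ Nonempty (X (Fin.last n) ≅ E) ∧
      ∀ i : Fin n, ∃ (A : D) (g : X i.succ ⟶ A) (h : A ⟶ (X i.castSucc)⟦(1 : ℤ)⟧),
        (Triangle.mk (f i) g h ∈ distTriang D) ∧ σ.IsStable φ A

end StabilityDefs

noncomputable section

variable (A : Type u) [CommRing A] [HasDerivedCategory.{w} (ModuleCat.{u} A)]

/-- The objects of the derived category of `A`-modules belonging to `D^b(mod A)`, i.e.
those with only finitely many nonzero cohomology modules, all of them finitely
generated. -/
def DbCoh : Set (DerivedCategory (ModuleCat.{u} A)) :=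
  {E | (∃ a b : ℤ, ∀ i : ℤ, (i < a ∨ b < i) →
          IsZero ((DerivedCategory.homologyFunctor (ModuleCat.{u} A) i).obj E)) ∧
       (∀ i : ℤ, Module.Finite A
          ((DerivedCategory.homologyFunctor (ModuleCat.{u} A) i).obj E))}

/-- An `A`-module viewed as an object of the derived category, placed in degree `0`. -/
abbrev degZero (M : ModuleCat.{u} A) : DerivedCategory (ModuleCat.{u} A) :=
  (DerivedCategory.singleFunctor (ModuleCat.{u} A) 0).obj M

end

/-!
The cohomology of a semistable object sits in a single degree, and phase plus that degree is one
constant for all semistable objects: if `H^b(E)` is the top cohomology of `E ∈ P(φ)` and `H^a(F)`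
the bottom cohomology of `F ∈ P(ψ)`, a nonzero map `H^b(E) ⟶ H^a(F)`, which exists because `k` is a
quotient of the first module and a submodule of the second, lifts to a nonzero map
`E ⟶ F[a - b]`, so that `φ ≤ ψ + a - b`. Hence in a Harder–Narasimhan filtration of `k` the
phases, and with them the degrees, of the factors separate the cohomology of `k` into different
degrees, so there is only one factor and `k` is semistable; in its `P(φ)` every distinguished
triangle is a short exact sequence of modules, in which the simple module `k` admits no proper
subobject.
-/

section Filtration

variable {D : Type*} [Category D] [HasZeroObject D] [Preadditive D] [HasShift D ℤ]
  [∀ n : ℤ, (CategoryTheory.shiftFunctor D n).Additive] [Pretriangulated D]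

lemma prop_of_filtration (S : ObjectProperty D) [S.ContainsZero] [S.IsClosedUnderIsomorphisms]
    [S.IsTriangulatedClosed₂] {n : ℕ} {X : Fin (n + 1) → D}
    (f : ∀ i : Fin n, X i.castSucc ⟶ X i.succ) (hX₀ : IsZero (X 0))
    (hf : ∀ i, ∃ (A : D) (g : X i.succ ⟶ A) (h : A ⟶ (X i.castSucc)⟦(1 : ℤ)⟧),
      Triangle.mk (f i) g h ∈ distTriang D ∧ S A) (i : Fin (n + 1)) : S (X i) := by
  induction i using Fin.induction with
  | zero => exact S.prop_of_isZero hX₀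
  | succ i ih =>
    obtain ⟨A, g, h, hT, hA⟩ := hf i
    exact S.ext_of_isTriangulatedClosed₂ _ hT ih hA

lemma HasHNFiltration.exists_last_factor {P : ℝ → Set D} {E : D} (hE : HasHNFiltration P E)
    (hE₀ : ¬ IsZero E) :
    ∃ (φ : ℝ) (X A : D) (f : X ⟶ E) (g : E ⟶ A) (h : A ⟶ X⟦(1 : ℤ)⟧),
      Triangle.mk f g h ∈ distTriang D ∧ ¬ IsZero A ∧ A ∈ P φ ∧
      ∀ (S : ObjectProperty D) [S.ContainsZero] [S.IsClosedUnderIsomorphisms]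
        [S.IsTriangulatedClosed₂], (∀ ψ, φ < ψ → ∀ F ∈ P ψ, S F) → S X := by
  obtain ⟨n, X, f, φ, hX₀, ⟨e⟩, hφ, hf⟩ := hE
  obtain _ | m := n
  · exact absurd (hX₀.of_iso e.symm) hE₀
  obtain ⟨A, g, h, hT, hA₀, hA⟩ := hf (Fin.last m)
  refine ⟨φ (Fin.last m), X (Fin.last m).castSucc, A, f (Fin.last m) ≫ e.hom, e.inv ≫ g, h,
    isomorphic_distinguished _ hT _ (Triangle.isoMk _ _ (Iso.refl _) e.symm (Iso.refl _)
      ?_ ?_ ?_), hA₀, hA, fun S _ _ _ hS ↦ ?_⟩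
  · change (f (Fin.last m) ≫ e.hom) ≫ e.inv = 𝟙 _ ≫ f (Fin.last m)
    simp
  · exact Category.comp_id _
  · change h ≫ (𝟙 (X (Fin.last m).castSucc))⟦(1 : ℤ)⟧' = 𝟙 A ≫ h
    simp
  refine prop_of_filtration S (X := fun i ↦ X i.castSucc) (fun i ↦ f i.castSucc) hX₀
    (fun i ↦ ?_) (Fin.last m)
  obtain ⟨F, g, h, hT, -, hF⟩ := hf i.castSucc
  exact ⟨F, g, h, hT, hS _ (hφ i.castSucc_lt_last) F hF⟩

namespace StabilityConditionOn

variable {B : Set D} (σ : StabilityConditionOn B) {φ : ℝ} {E : D}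

lemma shift_one_mem_iff : E⟦(1 : ℤ)⟧ ∈ σ.P (φ + 1) ↔ E ∈ σ.P φ := by
  rw [σ.s3]
  constructor
  · rintro ⟨F, hF, ⟨e⟩⟩
    exact σ.P_iso φ F E hF ⟨((shiftFunctor D (1 : ℤ)).preimageIso e).symm⟩
  · exact fun hE ↦ ⟨E, hE, ⟨Iso.refl _⟩⟩

lemma shift_mem (hE : E ∈ σ.P φ) (n : ℤ) : E⟦n⟧ ∈ σ.P (φ + n) := by
  have shift_succ (m : ℤ) : E⟦m⟧ ∈ σ.P (φ + m) ↔ E⟦m + 1⟧ ∈ σ.P (φ + (m + 1 : ℤ)) := by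
    rw [← σ.shift_one_mem_iff, Int.cast_add, Int.cast_one, add_assoc]
    let e := (shiftFunctorAdd D m 1).app E
    exact ⟨fun h ↦ σ.P_iso _ _ _ h ⟨e.symm⟩, fun h ↦ σ.P_iso _ _ _ h ⟨e⟩⟩
  induction n using Int.induction_on with
  | zero => simpa using σ.P_iso φ E _ hE ⟨((shiftFunctorZero D ℤ).app E).symm⟩
  | succ i ih => exact (shift_succ i).1 ih
  | pred i ih => exact (shift_succ (-i - 1)).2 (by simpa only [sub_add_cancel] using ih)

end StabilityConditionOn

end Filtration

section Homology

open DerivedCategory.TStructure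

variable {C : Type u} [Category.{v} C] [Abelian C] [HasDerivedCategory.{w} C]

lemma isZero_of_isZero_homology {E : DerivedCategory C}
    (hE : ∀ n : ℤ, IsZero ((homologyFunctor C n).obj E)) : IsZero E := by
  have : E.IsLE 0 := (isLE_iff E 0).2 fun i _ ↦ hE i
  have : E.IsGE 1 := (isGE_iff E 1).2 fun i _ ↦ hE i
  exact t.isZero E 0 1

lemma isZero_of_isLE_of_isGE_of_isZero_homology (E : DerivedCategory C) (n : ℤ) [E.IsLE n]
    [E.IsGE n] (hE : IsZero ((homologyFunctor C n).obj E)) : IsZero E := by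
  refine isZero_of_isZero_homology fun i ↦ ?_
  obtain hi | rfl | hi := lt_trichotomy i n
  exacts [isZero_of_isGE E n i hi, hE, isZero_of_isLE E n i hi]

instance containsZero_t_le (n : ℤ) : (t (C := C) |>.le n).ContainsZero where
  exists_zero := by
    refine ⟨_, isZero_zero _, ?_⟩
    rw [t.le_iff_isLE]
    exact (isLE_iff _ n).2 fun i _ ↦ Functor.map_isZero _ (isZero_zero _)

instance isTriangulatedClosed₂_t_le (n : ℤ) : (t (C := C) |>.le n).IsTriangulatedClosed₂ :=
  .mk' fun T hT h₁ h₃ ↦ by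
    rw [t.le_iff_isLE] at h₁ h₃ ⊢
    exact t.isLE₂ T hT n h₁ h₃

lemma shortExact_homology {X Y Z : DerivedCategory C} {f : X ⟶ Y} {g : Y ⟶ Z}
    {h : Z ⟶ X⟦(1 : ℤ)⟧} (hT : Triangle.mk f g h ∈ distTriang _) (n : ℤ) (hX : X.IsLE n)
    (hZ : Z.IsGE n) :
    ((shortComplexOfDistTriangle _ hT).map (homologyFunctor C n)).ShortExact where
  exact := HomologySequence.exact₂ _ hT n
  mono_f := (HomologySequence.mono_homologyMap_mor₁_iff _ hT (n - 1) n).2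
    ((isZero_of_isGE Z n (n - 1) (by lia)).eq_of_src _ _)
  epi_g := (HomologySequence.epi_homologyMap_mor₂_iff _ hT n (n + 1)).2
    ((isZero_of_isLE X n (n + 1) (by lia)).eq_of_tgt _ _)

lemma isIso_homologyFunctor_map_truncGEπ_app (E : DerivedCategory C) (n : ℤ) :
    IsIso ((homologyFunctor C n).map ((t.truncGEπ n).app E)) :=
  (shortExact_homology (t.triangleLEGE_distinguished (n - 1) n (by lia) E) n
    (t.isLE_truncLE_obj E (n - 1) n) (t.isGE_truncGE_obj E n n)).isIso_g_iff.2
    (isZero_of_isLE ((t.truncLE (n - 1)).obj E) (n - 1) n (by lia))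

lemma isIso_homologyFunctor_map_truncLEι_app (E : DerivedCategory C) (n : ℤ) :
    IsIso ((homologyFunctor C n).map ((t.truncLEι n).app E)) :=
  (shortExact_homology (t.triangleLEGE_distinguished n (n + 1) rfl E) n
    (t.isLE_truncLE_obj E n n) (t.isGE_truncGE_obj E (n + 1) n)).isIso_f_iff.2
    (isZero_of_isGE ((t.truncGE (n + 1)).obj E) (n + 1) n (by lia))

lemma homologyFunctor_map_surjective_of_single {n : ℤ} {E F : DerivedCategory C} {M N : C}
    (e : E ≅ (singleFunctor C n).obj M) (e' : F ≅ (singleFunctor C n).obj N) :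
    Function.Surjective ((homologyFunctor C n).map (X := E) (Y := F)) := fun u ↦ by
  let α := singleFunctorCompHomologyFunctorIso C n
  let a := (homologyFunctor C n).mapIso e ≪≫ α.app M
  let a' := (homologyFunctor C n).mapIso e' ≪≫ α.app N
  let v : M ⟶ N := a.inv ≫ u ≫ a'.hom
  have hv : (homologyFunctor C n).map ((singleFunctor C n).map v) =
      α.hom.app M ≫ v ≫ α.inv.app N := (NatIso.naturality_2 α v).symm
  refine ⟨e.hom ≫ (singleFunctor C n).map v ≫ e'.inv, ?_⟩
  rw [Functor.map_comp, Functor.map_comp, hv]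
  simp [v, a, a', ← Functor.map_comp, ← Functor.map_comp_assoc]

lemma homologyFunctor_map_surjective (n : ℤ) (E F : DerivedCategory C) [E.IsLE n] [F.IsGE n] :
    Function.Surjective ((homologyFunctor C n).map (X := E) (Y := F)) := fun u ↦ by
  let p := (t.truncGEπ n).app E
  let q := (t.truncLEι n).app F
  have : IsIso ((homologyFunctor C n).map p) := isIso_homologyFunctor_map_truncGEπ_app E n
  have : IsIso ((homologyFunctor C n).map q) := isIso_homologyFunctor_map_truncLEι_app F n
  obtain ⟨M, ⟨e⟩⟩ := exists_iso_singleFunctor_obj_of_isGE_of_isLE ((t.truncGE n).obj E) n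
  obtain ⟨N, ⟨e'⟩⟩ := exists_iso_singleFunctor_obj_of_isGE_of_isLE ((t.truncLE n).obj F) n
  obtain ⟨f, hf⟩ := homologyFunctor_map_surjective_of_single e e'
    (inv ((homologyFunctor C n).map p) ≫ u ≫ inv ((homologyFunctor C n).map q))
  refine ⟨p ≫ f ≫ q, ?_⟩
  simp [hf]

lemma exists_isLE_of_minus {E : DerivedCategory C} (hE : t.minus E) {i : ℤ}
    (hi : ¬ IsZero ((homologyFunctor C i).obj E)) :
    ∃ b, i ≤ b ∧ E.IsLE b ∧ ¬ IsZero ((homologyFunctor C b).obj E) := by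
  obtain ⟨m, _⟩ := hE
  obtain ⟨b, hb, hmax⟩ := Int.exists_greatest_of_bdd
    (P := fun j ↦ ¬ IsZero ((homologyFunctor C j).obj E))
    ⟨m, fun j hj ↦ not_lt.1 fun hmj ↦ hj (isZero_of_isLE E m j hmj)⟩ ⟨i, hi⟩
  exact ⟨b, hmax i hi, (isLE_iff E b).2 fun j hj ↦ by_contra fun h ↦ hj.not_ge (hmax j h), hb⟩

lemma exists_isGE_of_plus {E : DerivedCategory C} (hE : t.plus E) {i : ℤ}
    (hi : ¬ IsZero ((homologyFunctor C i).obj E)) :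
    ∃ a, a ≤ i ∧ E.IsGE a ∧ ¬ IsZero ((homologyFunctor C a).obj E) := by
  obtain ⟨m, _⟩ := hE
  obtain ⟨a, ha, hmin⟩ := Int.exists_least_of_bdd
    (P := fun j ↦ ¬ IsZero ((homologyFunctor C j).obj E))
    ⟨m, fun j hj ↦ not_lt.1 fun hjm ↦ hj (isZero_of_isGE E m j hjm)⟩ ⟨i, hi⟩
  exact ⟨a, hmin i hi, (isGE_iff E a).2 fun j hj ↦ by_contra fun h ↦ hj.not_ge (hmin j h), ha⟩

end Homology

section Stability

open DerivedCategory.TStructure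

variable {C : Type u} [Category.{v} C] [Abelian C] [HasDerivedCategory.{w} C]

/-- A collection of bounded complexes any two nonzero cohomology objects of which are related by a
nonzero morphism. For `D^b(mod R)` with `R` Artinian local this holds because the residue field is
both a quotient and a submodule of every nonzero finitely generated module. -/
structure HasNonzeroHomologyMaps (B : Set (DerivedCategory C)) : Prop where
  bounded : ∀ E ∈ B, t.bounded E
  exists_ne_zero : ∀ E ∈ B, ∀ F ∈ B, ∀ i j : ℤ, ¬ IsZero ((homologyFunctor C i).obj E) →
    ¬ IsZero ((homologyFunctor C j).obj F) →
      ∃ u : (homologyFunctor C i).obj E ⟶ (homologyFunctor C j).obj F, u ≠ 0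

namespace StabilityConditionOn

variable {B : Set (DerivedCategory C)} (σ : StabilityConditionOn B) {φ ψ : ℝ}
  {E F : DerivedCategory C}

lemma phase_add_le_of_homology_map_ne_zero (hE : E ∈ σ.P φ) (hF : F ∈ σ.P ψ) {a b : ℤ}
    [E.IsLE b] [F.IsGE a] {u : (homologyFunctor C b).obj E ⟶ (homologyFunctor C a).obj F}
    (hu : u ≠ 0) : φ + b ≤ ψ + a := by
  have : (F⟦a - b⟧).IsGE b := t.isGE_shift F a (a - b) b
  let e : (homologyFunctor C b).obj (F⟦a - b⟧) ≅ (homologyFunctor C a).obj F :=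
    ((homologyFunctor C 0).shiftIso (a - b) b a (by lia)).app F
  obtain ⟨f, hf⟩ := homologyFunctor_map_surjective b E (F⟦a - b⟧) (u ≫ e.inv)
  have hf₀ : f ≠ 0 := by
    rintro rfl
    refine hu ((cancel_mono e.inv).1 ?_)
    rw [← hf, Functor.map_zero, zero_comp]
  by_contra! hlt
  refine hf₀ (σ.s2 φ (ψ + (a - b : ℤ)) ?_ E hE _ (σ.shift_mem hF (a - b)) f)
  push_cast
  linarith

lemma phase_add_degree_le (hB : HasNonzeroHomologyMaps B) (hE : E ∈ σ.P φ) (hF : F ∈ σ.P ψ)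
    {i j : ℤ} (hi : ¬ IsZero ((homologyFunctor C i).obj E))
    (hj : ¬ IsZero ((homologyFunctor C j).obj F)) : φ + i ≤ ψ + j := by
  obtain ⟨b, hib, _, hb⟩ := exists_isLE_of_minus (hB.bounded E (σ.P_le φ hE)).2 hi
  obtain ⟨a, haj, _, ha⟩ := exists_isGE_of_plus (hB.bounded F (σ.P_le ψ hF)).1 hj
  obtain ⟨u, hu⟩ := hB.exists_ne_zero E (σ.P_le φ hE) F (σ.P_le ψ hF) b a hb ha
  calc φ + i ≤ φ + b := by gcongr
    _ ≤ ψ + a := σ.phase_add_le_of_homology_map_ne_zero hE hF hu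
    _ ≤ ψ + j := by gcongr

lemma isLE_of_phase_add_lt (hB : HasNonzeroHomologyMaps B) (hE : E ∈ σ.P φ) (hF : F ∈ σ.P ψ)
    {j n : ℤ} (hj : ¬ IsZero ((homologyFunctor C j).obj F)) (h : ψ + j < φ + (n + 1)) :
    E.IsLE n := by
  refine (isLE_iff E n).2 fun i hi ↦ by_contra fun hEi ↦ ?_
  have hni : (n + 1 : ℝ) ≤ i := by exact_mod_cast hi
  linarith [σ.phase_add_degree_le hB hE hF hEi hj]

lemma isGE_of_phase_add_lt (hB : HasNonzeroHomologyMaps B) (hE : E ∈ σ.P φ) (hF : F ∈ σ.P ψ)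
    {j n : ℤ} (hj : ¬ IsZero ((homologyFunctor C j).obj F)) (h : φ + (n - 1) < ψ + j) :
    E.IsGE n := by
  refine (isGE_iff E n).2 fun i hi ↦ by_contra fun hEi ↦ ?_
  have hin : (i : ℝ) ≤ n - 1 := by exact_mod_cast Int.le_sub_one_of_lt hi
  linarith [σ.phase_add_degree_le hB hF hE hj hEi]

theorem exists_isSemistable_of_isLE_of_isGE (hB : HasNonzeroHomologyMaps B) (n : ℤ) (hE : E ∈ B)
    (hE₀ : ¬ IsZero E) [E.IsLE n] [E.IsGE n] : ∃ φ, σ.IsSemistable φ E := by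
  obtain ⟨φ, X, A, f, g, h, hT, hA₀, hA, hX⟩ := (σ.s4 E hE hE₀).exists_last_factor hE₀
  obtain ⟨d, hd⟩ : ∃ d, ¬ IsZero ((homologyFunctor C d).obj A) := by
    by_contra! hA_homology
    exact hA₀ (isZero_of_isZero_homology hA_homology)
  have hX_le : X.IsLE (d - 1) := by
    refine (t.le_iff_isLE X (d - 1)).1 (hX _ fun ψ hψ F hF ↦ ?_)
    rw [t.le_iff_isLE]
    exact σ.isLE_of_phase_add_lt hB hF hA hd (by push_cast; linarith)
  have hA_ge : A.IsGE d := σ.isGE_of_phase_add_lt hB hA hA hd (by linarith)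
  have hdn : d = n := by
    have : Epi ((homologyFunctor C d).map g) :=
      (shortExact_homology hT d (t.isLE_of_le X (d - 1) d) hA_ge).epi_g
    have hEd : ¬ IsZero ((homologyFunctor C d).obj E) :=
      fun hEd ↦ hd (hEd.of_epi ((homologyFunctor C d).map g))
    by_contra hdn
    obtain hlt | hlt := lt_or_gt_of_ne hdn
    exacts [hEd (isZero_of_isGE E n d hlt), hEd (isZero_of_isLE E n d hlt)]
  subst hdn
  have : (A⟦(-1 : ℤ)⟧).IsGE (d + 1) := t.isGE_shift A d (-1) (d + 1)
  have hX_ge : X.IsGE d := t.isGE₂ _ (inv_rot_of_distTriang _ hT) d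
    (t.isGE_of_ge (A⟦(-1 : ℤ)⟧) d (d + 1)) ‹_›
  have hX₀ : IsZero X := t.isZero X (d - 1) d
  have : IsIso g := (Triangle.isZero₁_iff_isIso₂ _ hT).1 hX₀
  exact ⟨φ, σ.P_iso φ A E hA ⟨(asIso g).symm⟩, hE₀⟩

theorem exists_isStable_of_simple_homology (hB : HasNonzeroHomologyMaps B) (n : ℤ) (hE : E ∈ B)
    [E.IsLE n] [E.IsGE n] [Simple ((homologyFunctor C n).obj E)] : ∃ φ, σ.IsStable φ E := by
  have hEn : ¬ IsZero ((homologyFunctor C n).obj E) := Simple.not_isZero _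
  obtain ⟨φ, hφ⟩ := σ.exists_isSemistable_of_isLE_of_isGE hB n hE
    fun h ↦ hEn (Functor.map_isZero _ h)
  refine ⟨φ, hφ, fun A K f g h hT hA hK ↦ ?_⟩
  have isLE {F} (hF : F ∈ σ.P φ) : F.IsLE n := σ.isLE_of_phase_add_lt hB hF hφ.1 hEn (by linarith)
  have isGE {F} (hF : F ∈ σ.P φ) : F.IsGE n := σ.isGE_of_phase_add_lt hB hF hφ.1 hEn (by linarith)
  have : A.IsLE n := isLE hA
  have : A.IsGE n := isGE hA
  have : K.IsLE n := isLE hK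
  have : K.IsGE n := isGE hK
  have hS := shortExact_homology hT n ‹_› ‹_›
  have : Mono ((homologyFunctor C n).map f) := hS.mono_f
  by_cases hf : (homologyFunctor C n).map f = 0
  · exact .inl (isZero_of_isLE_of_isGE_of_isZero_homology A n (.of_mono_eq_zero _ hf))
  · have : IsIso ((homologyFunctor C n).map f) := isIso_of_mono_of_nonzero hf
    exact .inr (isZero_of_isLE_of_isGE_of_isZero_homology K n (hS.isIso_f_iff.1 this))

end StabilityConditionOn

end Stability

section Modules

lemma exists_linearMap_ne_zero (R M N : Type*) [CommRing R] [IsLocalRing R] [AddCommGroup M]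
    [AddCommGroup N] [Module R M] [Module R N] [IsCoatomic (Submodule R M)]
    [IsAtomic (Submodule R N)] [Nontrivial M] [Nontrivial N] : ∃ u : M →ₗ[R] N, u ≠ 0 := by
  obtain ⟨P, hP⟩ := IsCoatomic.exists_coatom (Submodule R M)
  obtain ⟨S, hS⟩ := IsAtomic.exists_atom (Submodule R N)
  have : IsSimpleModule R (M ⧸ P) := isSimpleModule_iff_isCoatom.2 hP
  have : IsSimpleModule R S := isSimpleModule_iff_isAtom.2 hS
  obtain ⟨I, hI, ⟨e⟩⟩ := isSimpleModule_iff_quot_maximal.1 ‹IsSimpleModule R (M ⧸ P)›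
  obtain ⟨J, hJ, ⟨e'⟩⟩ := isSimpleModule_iff_quot_maximal.1 ‹IsSimpleModule R S›
  obtain rfl : I = J := (IsLocalRing.eq_maximalIdeal hI).trans (IsLocalRing.eq_maximalIdeal hJ).symm
  have : Nontrivial S := IsSimpleModule.nontrivial R S
  obtain ⟨s, hs⟩ := exists_ne (0 : S)
  obtain ⟨m, hm⟩ := (e.trans e'.symm).surjective.comp P.mkQ_surjective s
  refine ⟨S.subtype ∘ₗ (e.trans e'.symm).toLinearMap ∘ₗ P.mkQ, fun hu ↦ hs (Subtype.ext ?_)⟩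
  rw [← hm]
  exact LinearMap.congr_fun hu m

variable (R : Type u) [CommRing R] [HasDerivedCategory.{w} (ModuleCat.{u} R)]

namespace DbCoh

lemma hasNonzeroHomologyMaps [IsArtinianRing R] [IsLocalRing R] :
    HasNonzeroHomologyMaps (DbCoh R) where
  bounded := by
    rintro E ⟨⟨a, b, h⟩, -⟩
    exact ⟨⟨a, (isGE_iff E a).2 fun i hi ↦ h i (.inl hi)⟩,
      ⟨b, (isLE_iff E b).2 fun i hi ↦ h i (.inr hi)⟩⟩
  exists_ne_zero E hE F hF i j hi hj := by
    rw [ModuleCat.isZero_iff_subsingleton, not_subsingleton_iff_nontrivial] at hi hj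
    have := hE.2 i
    have := hF.2 j
    obtain ⟨u, hu⟩ := exists_linearMap_ne_zero R ((homologyFunctor (ModuleCat R) i).obj E)
      ((homologyFunctor (ModuleCat R) j).obj F)
    exact ⟨ModuleCat.ofHom u, fun h ↦ hu (congrArg ModuleCat.Hom.hom h)⟩

lemma degZero_mem (M : ModuleCat.{u} R) [Module.Finite R M] : degZero R M ∈ DbCoh R := by
  refine ⟨⟨0, 0, fun i hi ↦ hi.elim (isZero_of_isGE (degZero R M) 0 i ·)
    (isZero_of_isLE (degZero R M) 0 i ·)⟩, fun i ↦ ?_⟩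
  obtain hi | rfl | hi := lt_trichotomy i 0
  · have := ModuleCat.subsingleton_of_isZero (isZero_of_isGE (degZero R M) 0 i hi)
    infer_instance
  · let e : (homologyFunctor (ModuleCat R) 0).obj (degZero R M) ≅ M :=
      (singleFunctorCompHomologyFunctorIso (ModuleCat R) 0).app M
    exact Module.Finite.equiv e.symm.toLinearEquiv
  · have := ModuleCat.subsingleton_of_isZero (isZero_of_isLE (degZero R M) 0 i hi)
    infer_instance

end DbCoh

end Modules

theorem stmt7_general (R : Type u) [CommRing R] [IsArtinianRing R] [IsLocalRing R]
    [HasDerivedCategory.{w} (ModuleCat.{u} R)] (σ : StabilityConditionOn (DbCoh R)) :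
    ∃ φ : ℝ, σ.IsStable φ
      (degZero R (ModuleCat.of R (R ⧸ IsLocalRing.maximalIdeal R))) := by
  let k := ModuleCat.of R (R ⧸ IsLocalRing.maximalIdeal R)
  have : IsSimpleModule R k := isSimpleModule_iff_quot_maximal.2
    ⟨IsLocalRing.maximalIdeal R, inferInstance, ⟨LinearEquiv.refl R k⟩⟩
  have : Simple k := simple_of_isSimpleModule
  let e : (homologyFunctor (ModuleCat R) 0).obj (degZero R k) ≅ k :=
    (singleFunctorCompHomologyFunctorIso (ModuleCat R) 0).app k
  have : Simple ((homologyFunctor (ModuleCat R) 0).obj (degZero R k)) := Simple.of_iso e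
  exact σ.exists_isStable_of_simple_homology (DbCoh.hasNonzeroHomologyMaps R) 0
    (DbCoh.degZero_mem R k)

/-- For any stability condition `σ` on `D^b(mod R)`, `R` an Artinian local commutative
ring, having the Jordan–Hölder property, the residue field `k = R/𝔪`, viewed as a
complex concentrated in degree `0`, is `σ`-stable. -/
theorem stmt7 (R : Type u) [CommRing R] [IsArtinianRing R] [IsLocalRing R]
    [HasDerivedCategory.{w} (ModuleCat.{u} R)]
    (σ : StabilityConditionOn (DbCoh R)) (hJH : σ.HasJHProperty) :
    ∃ φ : ℝ, σ.IsStable φ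
      (degZero R (ModuleCat.of R (R ⧸ IsLocalRing.maximalIdeal R))) :=
  stmt7_general R σ
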